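/- arXiv:0905.1099 — 2 statements merged into one kernel-verified Lean document; each statement's English description precedes it below -/
import Mathlib

section
/- In the AF2 type system, types are preserved by β-reduction: if Γ ⊢_AF2 t : A and t β-reduces to t′, then Γ ⊢_AF2 t′ : A. -/
/- Pure untyped λ-calculus with de Bruijn indices. -/

inductive Lam : Type
  | var : ℕ → Lam
  | app : Lam → Lam → Lam
  | abs : Lam → Lam
  deriving DecidableEq

namespace Lam

/-- Renaming of free variables. -/
def rename (ρ : ℕ → ℕ) : Lam → Lam
  | var i => var (ρ i)
  | app u v => app (u.rename ρ) (v.rename ρ)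
  | abs u => abs (u.rename (fun i => match i with | 0 => 0 | j+1 => ρ j + 1))

/-- Lifting of a simultaneous substitution under a binder. -/
def liftSub (σ : ℕ → Lam) : ℕ → Lam
  | 0 => var 0
  | i+1 => (σ i).rename (· + 1)

/-- Simultaneous (capture-avoiding) substitution of the free variables. -/
def subst (σ : ℕ → Lam) : Lam → Lam
  | var i => σ i
  | app u v => app (u.subst σ) (v.subst σ)
  | abs u => abs (u.subst (liftSub σ))

/-- `u.subst0 v` is `u[v/x]` for the first variable. -/
def subst0 (u v : Lam) : Lam :=
  u.subst (fun i => match i with | 0 => v | j+1 => var j)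

/-- One step of β-reduction (anywhere in the term). -/
inductive Beta : Lam → Lam → Prop
  | beta (u v : Lam) : Beta (app (abs u) v) (u.subst0 v)
  | appL {u u'} (v) : Beta u u' → Beta (app u v) (app u' v)
  | appR (u) {v v'} : Beta v v' → Beta (app u v) (app u v')
  | abs {u u'} : Beta u u' → Beta (abs u) (abs u')

/-- β-equivalence `≃β`. -/
def BetaEq : Lam → Lam → Prop := Relation.EqvGen Beta

/-- A term is normal if it has no β-redex. -/
def Normal (t : Lam) : Prop := ∀ u, ¬ Beta t u

def IsAbs : Lam → Prop
  | abs _ => True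
  | _ => False

/-- One step of head reduction: reduction of the head redex. -/
inductive HeadStep : Lam → Lam → Prop
  | beta (u v) : HeadStep (app (abs u) v) (u.subst0 v)
  | appL {u u'} (v) : ¬ u.IsAbs → HeadStep u u' → HeadStep (app u v) (app u' v)
  | abs {u u'} : HeadStep u u' → HeadStep (abs u) (abs u')

/-- `HeadRedN n u v` : `u` head-reduces to `v` in exactly `n` steps (`u ≻ v` with `n(u,v) = n`). -/
inductive HeadRedN : ℕ → Lam → Lam → Prop
  | refl (u) : HeadRedN 0 u u
  | step {n u v w} : HeadStep u v → HeadRedN n v w → HeadRedN (n+1) u w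

/-- `u ≻ v` : `v` is obtained from `u` by some head reductions. -/
def HeadRed (u v : Lam) : Prop := ∃ n, HeadRedN n u v

/-- Head normal form. -/
def HeadNF (t : Lam) : Prop := ∀ u, ¬ HeadStep t u

def ClosedUnder : ℕ → Lam → Prop
  | k, var i => i < k
  | k, app u v => ClosedUnder k u ∧ ClosedUnder k v
  | k, abs u => ClosedUnder (k+1) u

/-- Closed λ-term. -/
def Closed (t : Lam) : Prop := ClosedUnder 0 t

/-- `(f)ⁿx` : `iterApp f n x = (f)(f)…(f)x`. -/
def iterApp (f : Lam) : ℕ → Lam → Lam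
  | 0, x => x
  | n+1, x => app f (iterApp f n x)

/-- The Church integer `n̲ = λxλf(f)ⁿx`. -/
def church (n : ℕ) : Lam := abs (abs (iterApp (var 0) n (var 1)))

/-- `(t)w₁…wₖ`. -/
def appList (t : Lam) (ws : List Lam) : Lam := ws.foldl app t

/-- `T` is a storage operator for the closed normal term `t` :
there is `τ ≃β t` such that for every `θ ≃β t` there is a substitution `σ`
(not touching the fresh variable `f`, represented by the de Bruijn index `0`)
with `(T)θf ≻ (f)σ(τ)`. -/
def IsStorageFor (T t : Lam) : Prop :=
  Closed T ∧ ∃ τ, BetaEq τ t ∧ ∀ θ, BetaEq θ t →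
    ∃ σ : ℕ → Lam, σ 0 = var 0 ∧
      HeadRed (app (app T θ) (var 0)) (app (var 0) (τ.subst σ))

end Lam

/- Second order predicate logic : the types of the AF2 type system. -/

/-- A first order language: function symbols with arities, and predicate symbols. -/
structure Sig where
  Fn : Type
  arFn : Fn → ℕ
  Pr : Type

/-- First order terms over `S` (de Bruijn indices for first order variables). -/
inductive FOTerm (S : Sig) : Type
  | var : ℕ → FOTerm S
  | fn : (f : S.Fn) → (Fin (S.arFn f) → FOTerm S) → FOTerm S

namespace FOTerm

variable {S : Sig}

def rename (ρ : ℕ → ℕ) : FOTerm S → FOTerm S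
  | var i => var (ρ i)
  | fn f ts => fn f (fun i => (ts i).rename ρ)

def liftSub (σ : ℕ → FOTerm S) : ℕ → FOTerm S
  | 0 => var 0
  | i+1 => (σ i).rename (· + 1)

/-- Simultaneous substitution on first order terms. -/
def subst (σ : ℕ → FOTerm S) : FOTerm S → FOTerm S
  | var i => σ i
  | fn f ts => fn f (fun i => (ts i).subst σ)

end FOTerm

/-- Formulas of second order predicate logic over `S` : `⊥`, atomic formulas
`P(t₁,…,tₙ)` (predicate symbol) and `X(t₁,…,tₙ)` (predicate variable, de Bruijn),
implication, first order and second order universal quantification. -/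
inductive Form (S : Sig) : Type
  | bot : Form S
  | pr : S.Pr → List (FOTerm S) → Form S
  | pvar : ℕ → List (FOTerm S) → Form S
  | arr : Form S → Form S → Form S
  | fall : Form S → Form S
  | pall : Form S → Form S

namespace Form

variable {S : Sig}

/-- `¬A = A → ⊥`. -/
def neg (A : Form S) : Form S := arr A bot

/-- Substitution of first order terms for the first order variables of a formula. -/
def substFO (σ : ℕ → FOTerm S) : Form S → Form S
  | bot => bot
  | pr P ts => pr P (ts.map (FOTerm.subst σ))
  | pvar X ts => pvar X (ts.map (FOTerm.subst σ))
  | arr A B => arr (A.substFO σ) (B.substFO σ)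
  | fall A => fall (A.substFO (FOTerm.liftSub σ))
  | pall A => pall (A.substFO σ)

/-- `A[u/x]` for the first first-order variable. -/
def substFO0 (A : Form S) (u : FOTerm S) : Form S :=
  A.substFO (fun i => match i with | 0 => u | j+1 => FOTerm.var j)

/-- Lifting of the free first order variables (used for the rule (4)). -/
def shiftFO (A : Form S) : Form S := A.substFO (fun i => FOTerm.var (i+1))

/-- Renaming of the free predicate variables. -/
def rename2 (ρ : ℕ → ℕ) : Form S → Form S
  | bot => bot
  | pr P ts => pr P ts
  | pvar X ts => pvar (ρ X) ts
  | arr A B => arr (A.rename2 ρ) (B.rename2 ρ)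
  | fall A => fall (A.rename2 ρ)
  | pall A => pall (A.rename2 (fun i => match i with | 0 => 0 | j+1 => ρ j + 1))

/-- `inst2 G d e A` : substitution `A[G/X]` of the formula `G` (whose first order
variables `0,…,k-1` are the parameters of the predicate variable `X`) for the
predicate variable `X` of de Bruijn index `e`, where `d` first order binders have
been crossed. Each atomic subformula `X(t₁,…,tₖ)` is replaced by `G[t₁/x₁,…,tₖ/xₖ]`. -/
def inst2 (G : Form S) : ℕ → ℕ → Form S → Form S
  | _, _, bot => bot
  | _, _, pr P ts => pr P ts
  | d, e, pvar X ts =>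
      if X = e then
        (G.rename2 (· + e)).substFO (fun i =>
          if h : i < ts.length then ts.get ⟨i, h⟩ else FOTerm.var (i - ts.length + d))
      else pvar (if e < X then X - 1 else X) ts
  | d, e, arr A B => arr (inst2 G d e A) (inst2 G d e B)
  | d, e, fall A => fall (inst2 G (d+1) e A)
  | d, e, pall A => pall (inst2 G d (e+1) A)

/-- `A[G/X]` for the first predicate variable. -/
def inst2_0 (A G : Form S) : Form S := inst2 G 0 0 A

end Form

/-- Axioms of the equational theory: substitution instances of the equations of `E`. -/
def EqAx {S : Sig} (E : Set (FOTerm S × FOTerm S)) (u v : FOTerm S) : Prop :=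
  ∃ p ∈ E, ∃ σ : ℕ → FOTerm S, u = p.1.subst σ ∧ v = p.2.subst σ

/-- `u ≈ v` : the equivalence relation generated by the substitution instances
of the equations of `E`. -/
def EqE {S : Sig} (E : Set (FOTerm S × FOTerm S)) : FOTerm S → FOTerm S → Prop :=
  Relation.EqvGen (EqAx E)

/-- The AF2 type system: `AF2 S E Γ t A` means `Γ ⊢_{AF2} t : A`
with respect to the set of equations `E` (de Bruijn presentation: the rules
(4) and (6) of ∀-introduction lift the context, which implements the side
condition that the quantified variable does not occur free in `Γ`). -/
inductive AF2 (S : Sig) (E : Set (FOTerm S × FOTerm S)) :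
    List (Form S) → Lam → Form S → Prop
  | var {Γ : List (Form S)} {i : ℕ} {A : Form S} :
      Γ[i]? = some A → AF2 S E Γ (.var i) A
  | absI {Γ : List (Form S)} {A B : Form S} {t : Lam} :
      AF2 S E (A :: Γ) t B → AF2 S E Γ (.abs t) (.arr A B)
  | appE {Γ : List (Form S)} {A B : Form S} {u v : Lam} :
      AF2 S E Γ u (.arr A B) → AF2 S E Γ v A → AF2 S E Γ (.app u v) B
  | fallI {Γ : List (Form S)} {t : Lam} {A : Form S} :
      AF2 S E (Γ.map Form.shiftFO) t A → AF2 S E Γ t (.fall A)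
  | fallE {Γ : List (Form S)} {t : Lam} {A : Form S} (u : FOTerm S) :
      AF2 S E Γ t (.fall A) → AF2 S E Γ t (A.substFO0 u)
  | pallI {Γ : List (Form S)} {t : Lam} {A : Form S} :
      AF2 S E (Γ.map (Form.rename2 (· + 1))) t A → AF2 S E Γ t (.pall A)
  | pallE {Γ : List (Form S)} {t : Lam} {A : Form S} (G : Form S) :
      AF2 S E Γ t (.pall A) → AF2 S E Γ t (A.inst2_0 G)
  | eqE {Γ : List (Form S)} {t : Lam} {A : Form S} {u v : FOTerm S} :
      AF2 S E Γ t (A.substFO0 u) → EqE E u v → AF2 S E Γ t (A.substFO0 v)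

/-!
A derivation of `Γ ⊢ λu : A` can be rearranged so that, after the typing of the body `u`, it uses
introduction rules only: an elimination which follows an introduction is absorbed by substituting
in the derivation of its premise, and the equational rule moves through the connectives of the
type. If `A` is an implication, this types the body of the redex, and subject reduction follows
from the substitution lemma for λ-terms.

The substance is that typing is stable under substitution for predicate variables. Composing
`A[H/X]` with a substitution `Φ` should give `A` with `Φ` applied and `H[Φ]` put for `X`. But
predicate variables have no fixed arity: when `X` occurs in `A` with several numbers of arguments,
a free variable of `H[Φ]` which escapes the parameters of one occurrence may be read as a parameter
at another. The remedy is to move these free variables far beyond the parameters, at indices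
from which they can be recovered whatever the arity, and to restore their values afterwards by
generalisation and instantiation.
-/

namespace FOTerm

variable {S : Sig} {ι : Type}

/-- The substitution `x_i ↦ x_{i+n}`, which crosses `n` first order binders. -/
def shift (n : ℕ) : ℕ → FOTerm S := fun i => var (i + n)

/-- The substitution which sends the first `ts.length` variables to the terms `ts` and the
following ones according to `θ`. It models both the passage of arguments to a predicate variable
and, for a one-element list, the substitution for the first variable. -/
def extend (ts : List (FOTerm S)) (θ : ℕ → FOTerm S) : ℕ → FOTerm S :=
  fun i => ts.getD i (θ (i - ts.length))

theorem rename_eq_subst (ρ : ℕ → ℕ) (t : FOTerm S) : t.rename ρ = t.subst (var ∘ ρ) := by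
  induction t with
  | var i => rfl
  | fn f ts ih => simp only [rename, subst, ih]

theorem subst_subst (σ τ : ℕ → FOTerm S) (t : FOTerm S) :
    (t.subst σ).subst τ = t.subst (subst τ ∘ σ) := by
  induction t with
  | var i => rfl
  | fn f ts ih => simp only [subst, ih]

theorem subst_comp_subst (σ τ : ℕ → FOTerm S) : subst τ ∘ subst σ = subst (subst τ ∘ σ) :=
  funext (subst_subst σ τ)

theorem subst_comp_subst_comp (σ τ : ℕ → FOTerm S) (θ : ι → FOTerm S) :
    subst τ ∘ subst σ ∘ θ = subst (subst τ ∘ σ) ∘ θ := by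
  rw [← Function.comp_assoc, subst_comp_subst]

theorem subst_var : subst (var : ℕ → FOTerm S) = id := by
  funext t
  induction t with
  | var i => rfl
  | fn f ts ih => simp only [subst, ih, id]

theorem subst_comp_var (σ : ℕ → FOTerm S) : subst σ ∘ var = σ := rfl

theorem exists_subst_congr (t : FOTerm S) :
    ∃ N, ∀ σ τ : ℕ → FOTerm S, (∀ i < N, σ i = τ i) → t.subst σ = t.subst τ := by
  induction t with
  | var i => exact ⟨i + 1, fun σ τ h => h i i.lt_succ_self⟩
  | fn f ts ih =>
    choose N hN using ih
    refine ⟨Finset.univ.sup N, fun σ τ h => ?_⟩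
    have h_args : ∀ i, (ts i).subst σ = (ts i).subst τ := fun i =>
      hN i σ τ fun j hj => h j (hj.trans_le (Finset.le_sup (Finset.mem_univ i)))
    simp only [subst, h_args]

theorem exists_map_subst_congr (ts : List (FOTerm S)) :
    ∃ N, ∀ σ τ : ℕ → FOTerm S,
      (∀ i < N, σ i = τ i) → ts.map (subst σ) = ts.map (subst τ) := by
  induction ts with
  | nil => exact ⟨0, fun _ _ _ => rfl⟩
  | cons t ts ih =>
    obtain ⟨M, hM⟩ := exists_subst_congr t
    obtain ⟨N, hN⟩ := ih
    refine ⟨max M N, fun σ τ h => ?_⟩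
    rw [List.map_cons, List.map_cons, hM σ τ fun i hi => h i (lt_max_of_lt_left hi),
      hN σ τ fun i hi => h i (lt_max_of_lt_right hi)]

theorem extend_of_length_le {ts : List (FOTerm S)} (θ : ℕ → FOTerm S) {i : ℕ}
    (h : ts.length ≤ i) : extend ts θ i = θ (i - ts.length) :=
  List.getD_eq_default _ _ h

theorem extend_congr (ts : List (FOTerm S)) {θ θ' : ℕ → FOTerm S} {i : ℕ}
    (h : θ (i - ts.length) = θ' (i - ts.length)) : extend ts θ i = extend ts θ' i := by
  simp only [extend, h]

theorem subst_comp_extend (τ : ℕ → FOTerm S) (ts : List (FOTerm S)) (θ : ℕ → FOTerm S) :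
    subst τ ∘ extend ts θ = extend (ts.map (subst τ)) (subst τ ∘ θ) := by
  funext i
  simp only [Function.comp_apply, extend, List.length_map, List.getD_map]

theorem subst_extend_comp_shift (ts : List (FOTerm S)) (θ : ℕ → FOTerm S) :
    subst (extend ts θ) ∘ shift ts.length = θ := by
  funext i
  simp only [Function.comp_apply, shift, subst, extend_of_length_le θ (Nat.le_add_left _ i),
    Nat.add_sub_cancel]

theorem subst_extend_singleton_comp_shift (u : FOTerm S) (θ : ℕ → FOTerm S) :
    subst (extend [u] θ) ∘ shift 1 = θ :=
  subst_extend_comp_shift [u] θ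

theorem liftSub_eq_extend (σ : ℕ → FOTerm S) :
    liftSub σ = extend [var 0] (subst (shift 1) ∘ σ) := by
  funext i
  cases i with
  | zero => rfl
  | succ i => exact rename_eq_subst _ _

theorem liftSub_var : liftSub (var : ℕ → FOTerm S) = var := by
  funext i; cases i <;> rfl

theorem subst_extend_comp_liftSub (u : FOTerm S) (σ τ : ℕ → FOTerm S) :
    subst (extend [u] τ) ∘ liftSub σ = extend [u] (subst τ ∘ σ) := by
  rw [liftSub_eq_extend, subst_comp_extend, subst_comp_subst_comp,
    subst_extend_singleton_comp_shift]
  rfl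

theorem subst_liftSub_comp_shift (σ : ℕ → FOTerm S) :
    subst (liftSub σ) ∘ shift 1 = subst (shift 1) ∘ σ := by
  rw [liftSub_eq_extend, subst_extend_singleton_comp_shift]

theorem subst_liftSub_comp_subst_shift (σ : ℕ → FOTerm S) (θ : ι → FOTerm S) :
    subst (liftSub σ) ∘ subst (shift 1) ∘ θ = subst (shift 1) ∘ subst σ ∘ θ := by
  rw [subst_comp_subst_comp, subst_liftSub_comp_shift, subst_comp_subst_comp]

theorem subst_liftSub_comp_liftSub (σ τ : ℕ → FOTerm S) :
    subst (liftSub τ) ∘ liftSub σ = liftSub (subst τ ∘ σ) := by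
  rw [liftSub_eq_extend τ, subst_extend_comp_liftSub, ← subst_comp_subst_comp,
    ← liftSub_eq_extend]

theorem liftSub_extend_singleton (u : FOTerm S) : liftSub (extend [u] var)
    = subst (extend [u.subst (shift 1)] var) ∘ extend [var 1, var 0] (shift 2) := by
  funext i
  match i with
  | 0 => rfl
  | 1 => exact rename_eq_subst _ _
  | i + 2 => rfl

theorem extend_cons (u : FOTerm S) (ts : List (FOTerm S)) :
    extend (u :: ts) var
      = subst (extend ts var) ∘ extend [u.subst (shift ts.length)] var := by
  rw [subst_comp_extend, List.map_singleton, subst_subst, subst_extend_comp_shift, subst_var,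
    subst_comp_var]
  funext i
  cases i with
  | zero => rfl
  | succ i => simp [extend]

end FOTerm

open FOTerm (shift extend)

namespace Form

variable {S : Sig}

theorem substFO_substFO (A : Form S) (σ τ : ℕ → FOTerm S) :
    (A.substFO σ).substFO τ = A.substFO (FOTerm.subst τ ∘ σ) := by
  induction A generalizing σ τ with
  | bot => rfl
  | pr P ts => simp only [substFO, List.map_map, FOTerm.subst_comp_subst]
  | pvar X ts => simp only [substFO, List.map_map, FOTerm.subst_comp_subst]
  | arr A B ihA ihB => simp only [substFO, ihA, ihB]
  | fall A ih => simp only [substFO, ih, FOTerm.subst_liftSub_comp_liftSub]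
  | pall A ih => simp only [substFO, ih]

theorem substFO_var : substFO (FOTerm.var : ℕ → FOTerm S) = id := by
  funext A
  induction A with
  | bot => rfl
  | pr P ts => simp only [substFO, FOTerm.subst_var, List.map_id, id]
  | pvar X ts => simp only [substFO, FOTerm.subst_var, List.map_id, id]
  | arr A B ihA ihB => simp only [substFO, ihA, ihB, id]
  | fall A ih => simp only [substFO, FOTerm.liftSub_var, ih, id]
  | pall A ih => simp only [substFO, ih, id]

theorem exists_substFO_congr (A : Form S) :
    ∃ N, ∀ σ τ : ℕ → FOTerm S, (∀ i < N, σ i = τ i) → A.substFO σ = A.substFO τ := by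
  induction A with
  | bot => exact ⟨0, fun _ _ _ => rfl⟩
  | pr P ts =>
    obtain ⟨N, hN⟩ := FOTerm.exists_map_subst_congr ts
    exact ⟨N, fun σ τ h => congrArg (pr P) (hN σ τ h)⟩
  | pvar X ts =>
    obtain ⟨N, hN⟩ := FOTerm.exists_map_subst_congr ts
    exact ⟨N, fun σ τ h => congrArg (pvar X) (hN σ τ h)⟩
  | arr A B ihA ihB =>
    obtain ⟨M, hM⟩ := ihA
    obtain ⟨N, hN⟩ := ihB
    exact ⟨max M N, fun σ τ h => congrArg₂ arr (hM σ τ fun i hi => h i (lt_max_of_lt_left hi))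
      (hN σ τ fun i hi => h i (lt_max_of_lt_right hi))⟩
  | fall A ih =>
    obtain ⟨N, hN⟩ := ih
    refine ⟨N, fun σ τ h => congrArg fall (hN _ _ fun i hi => ?_)⟩
    cases i with
    | zero => rfl
    | succ i => simp only [FOTerm.liftSub, h i (Nat.lt_of_succ_lt hi)]
  | pall A ih =>
    obtain ⟨N, hN⟩ := ih
    exact ⟨N, fun σ τ h => congrArg pall (hN σ τ h)⟩

theorem substFO0_eq_substFO (A : Form S) (u : FOTerm S) :
    A.substFO0 u = A.substFO (extend [u] FOTerm.var) := by
  unfold substFO0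
  congr 1
  funext i
  cases i <;> rfl

theorem shiftFO_eq_substFO (A : Form S) : A.shiftFO = A.substFO (shift 1) := rfl

theorem substFO0_fall (A : Form S) (u : FOTerm S) : (fall A).substFO0 u
    = fall ((A.substFO (extend [.var 1, .var 0] (shift 2))).substFO0 (u.subst (shift 1))) := by
  rw [substFO0_eq_substFO, substFO0_eq_substFO, substFO_substFO, substFO,
    FOTerm.liftSub_extend_singleton]

theorem substFO0_shiftFO (A : Form S) (u : FOTerm S) : A.shiftFO.substFO0 u = A := by
  rw [substFO0_eq_substFO, shiftFO_eq_substFO, substFO_substFO,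
    FOTerm.subst_extend_singleton_comp_shift, substFO_var, id]

/-- Lifting of a renaming of predicate variables under a second order binder. -/
def liftRen (ρ : ℕ → ℕ) : ℕ → ℕ
  | 0 => 0
  | X + 1 => ρ X + 1

theorem rename2_pall (ρ : ℕ → ℕ) (A : Form S) :
    (pall A).rename2 ρ = pall (A.rename2 (liftRen ρ)) := by
  simp only [rename2]
  congr 2

theorem substFO_rename2 (A : Form S) (ρ : ℕ → ℕ) (σ : ℕ → FOTerm S) :
    (A.rename2 ρ).substFO σ = (A.substFO σ).rename2 ρ := by
  induction A generalizing ρ σ with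
  | bot | pr | pvar => rfl
  | arr A B ihA ihB => simp only [substFO, rename2, ihA, ihB]
  | fall A ih => simp only [substFO, rename2, ih]
  | pall A ih => simp only [substFO, rename2_pall, ih]

theorem rename2_rename2 (A : Form S) (ρ ρ' : ℕ → ℕ) :
    (A.rename2 ρ).rename2 ρ' = A.rename2 (ρ' ∘ ρ) := by
  induction A generalizing ρ ρ' with
  | bot | pr | pvar => rfl
  | arr A B ihA ihB => simp only [rename2, ihA, ihB]
  | fall A ih => simp only [rename2, ih]
  | pall A ih =>
    simp only [rename2_pall, ih]
    congr 2
    funext X; cases X <;> rfl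

theorem rename2_id (A : Form S) : A.rename2 id = A := by
  induction A with
  | bot | pr | pvar => rfl
  | arr A B ihA ihB => simp only [rename2, ihA, ihB]
  | fall A ih => simp only [rename2, ih]
  | pall A ih =>
    have h_lift : liftRen id = id := by funext X; cases X <;> rfl
    rw [rename2_pall, h_lift, ih]

/-- The greatest number of arguments given to a predicate variable. Nothing in the syntax fixes
the arity of a predicate variable, so one and the same variable may occur with several arities. -/
def maxArity : Form S → ℕ
  | bot => 0
  | pr _ _ => 0
  | pvar _ ts => ts.length
  | arr A B => max A.maxArity B.maxArity
  | fall A => A.maxArity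
  | pall A => A.maxArity

end Form

/-- A simultaneous substitution for the predicate variables: `Φ X θ ts` is the formula which
replaces `X(ts)`. The formulas substituted for predicate variables may have free first order
variables of their own; these are indexed by `ι` and take their values in the environment `θ`,
so that crossing a first order binder amounts to shifting `θ`. -/
@[ext]
structure PredSubst (S : Sig) (ι : Type) where
  toFun : ℕ → (ι → FOTerm S) → List (FOTerm S) → Form S
  substFO_toFun : ∀ X θ ts τ, (toFun X θ ts).substFO τ
    = toFun X (FOTerm.subst τ ∘ θ) (ts.map (FOTerm.subst τ))

namespace PredSubst

variable {S : Sig} {ι : Type}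

instance : CoeFun (PredSubst S ι) fun _ => ℕ → (ι → FOTerm S) → List (FOTerm S) → Form S :=
  ⟨toFun⟩

/-- Lifting of a predicate substitution under a second order binder. -/
def lift (Φ : PredSubst S ι) : PredSubst S ι where
  toFun
    | 0, _, ts => .pvar 0 ts
    | X + 1, θ, ts => (Φ X θ ts).rename2 (· + 1)
  substFO_toFun X θ ts τ := by
    cases X with
    | zero => rfl
    | succ X => simp only [Form.substFO_rename2, Φ.substFO_toFun]

/-- A renaming of predicate variables, as a substitution. -/
def ofRen (ρ : ℕ → ℕ) : PredSubst S ι where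
  toFun X _ ts := .pvar (ρ X) ts
  substFO_toFun _ _ _ _ := rfl

/-- The substitution of `G` for the first predicate variable, where the first variables of `G` are
the parameters and the following ones are read in the environment. -/
def inst (G : Form S) : PredSubst S ℕ where
  toFun
    | 0, θ, ts => G.substFO (extend ts θ)
    | X + 1, _, ts => .pvar X ts
  substFO_toFun X θ ts τ := by
    cases X with
    | zero => simp only [Form.substFO_substFO, FOTerm.subst_comp_extend]
    | succ X => rfl

theorem lift_ofRen (ρ : ℕ → ℕ) : (ofRen ρ : PredSubst S ι).lift = ofRen (Form.liftRen ρ) := by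
  ext X
  cases X <;> rfl

end PredSubst

namespace Form

variable {S : Sig} {ι : Type}

/-- Simultaneous substitution of `σ` for the first order variables and of `Φ`, in the
environment `θ`, for the predicate variables. -/
def bind (Φ : PredSubst S ι) (θ : ι → FOTerm S) (σ : ℕ → FOTerm S) : Form S → Form S
  | bot => bot
  | pr P ts => pr P (ts.map (FOTerm.subst σ))
  | pvar X ts => Φ X θ (ts.map (FOTerm.subst σ))
  | arr A B => arr (A.bind Φ θ σ) (B.bind Φ θ σ)
  | fall A => fall (A.bind Φ (FOTerm.subst (shift 1) ∘ θ) (FOTerm.liftSub σ))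
  | pall A => pall (A.bind Φ.lift θ σ)

theorem bind_ofRen (A : Form S) (ρ : ℕ → ℕ) (θ : ι → FOTerm S) (σ : ℕ → FOTerm S) :
    A.bind (.ofRen ρ) θ σ = (A.substFO σ).rename2 ρ := by
  induction A generalizing ρ θ σ with
  | bot | pr | pvar => rfl
  | arr A B ihA ihB => simp only [bind, substFO, rename2, ihA, ihB]
  | fall A ih => simp only [bind, substFO, rename2, ih]
  | pall A ih => simp only [bind, substFO, rename2_pall, PredSubst.lift_ofRen, ih]

theorem bind_ofRen_id (θ : ι → FOTerm S) (σ : ℕ → FOTerm S) :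
    bind (.ofRen id) θ σ = substFO σ := by
  funext A
  rw [bind_ofRen, rename2_id]

theorem bind_ofRen_var (ρ : ℕ → ℕ) (θ : ι → FOTerm S) :
    bind (.ofRen ρ) θ FOTerm.var = rename2 ρ := by
  funext A
  rw [bind_ofRen, substFO_var, id]

theorem substFO_bind (A : Form S) (Φ : PredSubst S ι) (θ : ι → FOTerm S)
    (σ τ : ℕ → FOTerm S) :
    (A.bind Φ θ σ).substFO τ = A.bind Φ (FOTerm.subst τ ∘ θ) (FOTerm.subst τ ∘ σ) := by
  induction A generalizing Φ θ σ τ with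
  | bot => rfl
  | pr P ts => simp only [bind, substFO, List.map_map, FOTerm.subst_comp_subst]
  | pvar X ts => simp only [bind, Φ.substFO_toFun, List.map_map, FOTerm.subst_comp_subst]
  | arr A B ihA ihB => simp only [bind, substFO, ihA, ihB]
  | fall A ih =>
    simp only [bind, substFO, ih, FOTerm.subst_liftSub_comp_liftSub,
      FOTerm.subst_liftSub_comp_subst_shift]
  | pall A ih => simp only [bind, substFO, ih]

theorem bind_substFO (A : Form S) (Φ : PredSubst S ι) (θ : ι → FOTerm S)
    (σ τ : ℕ → FOTerm S) :
    (A.substFO τ).bind Φ θ σ = A.bind Φ θ (FOTerm.subst σ ∘ τ) := by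
  induction A generalizing Φ θ σ τ with
  | bot => rfl
  | pr P ts => simp only [bind, substFO, List.map_map, FOTerm.subst_comp_subst]
  | pvar X ts => simp only [bind, substFO, List.map_map, FOTerm.subst_comp_subst]
  | arr A B ihA ihB => simp only [bind, substFO, ihA, ihB]
  | fall A ih => simp only [bind, substFO, ih, FOTerm.subst_liftSub_comp_liftSub]
  | pall A ih => simp only [bind, substFO, ih]

theorem exists_bind_congr (A : Form S) (Φ : PredSubst S ι) :
    ∃ N, ∀ θ (σ τ : ℕ → FOTerm S), (∀ i < N, σ i = τ i) → A.bind Φ θ σ = A.bind Φ θ τ := by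
  have h_split : ∀ θ σ, A.bind Φ θ σ = (A.substFO σ).bind Φ θ FOTerm.var := fun θ σ => by
    rw [bind_substFO, FOTerm.subst_var, Function.id_comp]
  obtain ⟨N, hN⟩ := A.exists_substFO_congr
  exact ⟨N, fun θ σ τ h => by rw [h_split, hN σ τ h, ← h_split]⟩

theorem rename2_bind (A : Form S) {Φ Ψ : PredSubst S ι} {ρ ρ' : ℕ → ℕ}
    (h : ∀ X θ ts, Ψ (ρ X) θ ts = (Φ X θ ts).rename2 ρ') (θ : ι → FOTerm S)
    (σ : ℕ → FOTerm S) : (A.bind Φ θ σ).rename2 ρ' = (A.rename2 ρ).bind Ψ θ σ := by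
  induction A generalizing Φ Ψ ρ ρ' θ σ with
  | bot | pr => rfl
  | pvar X ts => exact (h X θ _).symm
  | arr A B ihA ihB => simp only [bind, rename2, ihA h, ihB h]
  | fall A ih => simp only [bind, rename2, ih h]
  | pall A ih =>
    have h_lift : ∀ X θ ts, Ψ.lift (liftRen ρ X) θ ts
        = (Φ.lift X θ ts).rename2 (liftRen ρ') := by
      intro X θ ts
      cases X with
      | zero => rfl
      | succ X => simp only [PredSubst.lift, liftRen, h, rename2_rename2]; rfl
    simp only [bind, rename2_pall, ih h_lift]

theorem rename2_succ_bind (A : Form S) (Φ : PredSubst S ι) (θ : ι → FOTerm S)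
    (σ : ℕ → FOTerm S) :
    (A.bind Φ θ σ).rename2 (· + 1) = (A.rename2 (· + 1)).bind Φ.lift θ σ :=
  A.rename2_bind (fun _ _ _ => rfl) θ σ

theorem bind_inst_rename2_succ (A G : Form S) (θ σ : ℕ → FOTerm S) :
    (A.rename2 (· + 1)).bind (.inst G) θ σ = A.substFO σ := by
  rw [← A.rename2_bind (Φ := .ofRen id) (ρ' := id) (fun _ _ _ => rfl), bind_ofRen, rename2_id,
    rename2_id]

theorem shiftFO_bind (A : Form S) (Φ : PredSubst S ι) (θ : ι → FOTerm S)
    (σ : ℕ → FOTerm S) : (A.bind Φ θ σ).shiftFO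
      = A.shiftFO.bind Φ (FOTerm.subst (shift 1) ∘ θ) (FOTerm.liftSub σ) := by
  rw [shiftFO_eq_substFO, shiftFO_eq_substFO, substFO_bind, bind_substFO,
    FOTerm.subst_liftSub_comp_shift]

theorem bind_substFO0 (A : Form S) (Φ : PredSubst S ι) (θ : ι → FOTerm S)
    (σ : ℕ → FOTerm S) (u : FOTerm S) : (A.substFO0 u).bind Φ θ σ
      = (A.bind Φ (FOTerm.subst (shift 1) ∘ θ) (FOTerm.liftSub σ)).substFO0 (u.subst σ) := by
  rw [substFO0_eq_substFO, substFO0_eq_substFO, bind_substFO, substFO_bind,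
    FOTerm.subst_comp_subst_comp, FOTerm.subst_extend_singleton_comp_shift,
    FOTerm.subst_extend_comp_liftSub, FOTerm.subst_comp_extend, FOTerm.subst_var,
    FOTerm.subst_comp_var]
  rfl

end Form

namespace PredSubst

variable {S : Sig} {ι κ : Type}

/-- `Ψ.comp Φ` substitutes `Ψ` first and then `Φ` in the result; its environment consists of
one environment for each of them. -/
def comp (Ψ : PredSubst S ι) (Φ : PredSubst S κ) : PredSubst S (ι ⊕ κ) where
  toFun X ξ ts := (Ψ X (ξ ∘ Sum.inl) ts).bind Φ (ξ ∘ Sum.inr) FOTerm.var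
  substFO_toFun X ξ ts τ := by
    rw [Form.substFO_bind, FOTerm.subst_comp_var, Function.comp_assoc, Function.comp_assoc,
      ← Ψ.substFO_toFun, Form.bind_substFO, FOTerm.subst_var]
    rfl

theorem lift_comp (Ψ : PredSubst S ι) (Φ : PredSubst S κ) :
    (Ψ.comp Φ).lift = Ψ.lift.comp Φ.lift := by
  ext X ξ ts
  cases X with
  | zero => simp [lift, comp, Form.bind, FOTerm.subst_var]
  | succ X => exact Form.rename2_succ_bind _ _ _ _

end PredSubst

namespace Form

variable {S : Sig} {ι κ : Type}

theorem bind_bind (A : Form S) (Ψ : PredSubst S ι) (Φ : PredSubst S κ) (ζ : ι → FOTerm S)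
    (θ : κ → FOTerm S) (ρ σ : ℕ → FOTerm S) : (A.bind Ψ ζ ρ).bind Φ θ σ
      = A.bind (Ψ.comp Φ) (Sum.elim (FOTerm.subst σ ∘ ζ) θ) (FOTerm.subst σ ∘ ρ) := by
  induction A generalizing Ψ Φ ζ θ ρ σ with
  | bot => rfl
  | pr P ts => simp only [bind, List.map_map, FOTerm.subst_comp_subst]
  | pvar X ts =>
    have h_split : (Ψ X ζ (ts.map (FOTerm.subst ρ))).bind Φ θ σ
        = ((Ψ X ζ (ts.map (FOTerm.subst ρ))).substFO σ).bind Φ θ FOTerm.var := by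
      rw [bind_substFO, FOTerm.subst_var, Function.id_comp]
    simp only [bind, h_split, Ψ.substFO_toFun, List.map_map, FOTerm.subst_comp_subst]
    rfl
  | arr A B ihA ihB => simp only [bind, ihA, ihB]
  | fall A ih =>
    simp only [bind, ih, FOTerm.subst_liftSub_comp_subst_shift,
      FOTerm.subst_liftSub_comp_liftSub, Sum.comp_elim]
  | pall A ih => simp only [bind, ih, PredSubst.lift_comp]

theorem bind_eq_bind_comp {A : Form S} {Φ : PredSubst S ι} {Ψ : PredSubst S κ} {w : κ → ι}
    (h : ∀ X θ ts, ts.length ≤ A.maxArity → Φ X θ ts = Ψ X (θ ∘ w) ts) (θ : ι → FOTerm S)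
    (σ : ℕ → FOTerm S) : A.bind Φ θ σ = A.bind Ψ (θ ∘ w) σ := by
  induction A generalizing Φ Ψ θ σ with
  | bot | pr => rfl
  | pvar X ts => exact h X θ _ (List.length_map _).le
  | arr A B ihA ihB =>
    simp only [bind, ihA fun X θ ts hts => h X θ ts (le_max_of_le_left hts),
      ihB fun X θ ts hts => h X θ ts (le_max_of_le_right hts)]
  | fall A ih => simp only [bind, ih h, Function.comp_assoc]
  | pall A ih =>
    have h_lift : ∀ X θ ts, ts.length ≤ A.maxArity → Φ.lift X θ ts = Ψ.lift X (θ ∘ w) ts := by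
      intro X θ ts hts
      cases X with
      | zero => rfl
      | succ X => exact congrArg (rename2 (· + 1)) (h X θ ts hts)
    simp only [bind, ih h_lift]

end Form

namespace PredSubst

variable {S : Sig}

theorem iterate_lift_inst_apply (G : Form S) (e X : ℕ) (θ : ℕ → FOTerm S)
    (ts : List (FOTerm S)) : (lift^[e] (inst G)) X θ ts
      = if X = e then (G.rename2 (· + e)).substFO (extend ts θ)
        else .pvar (if e < X then X - 1 else X) ts := by
  induction e generalizing X with
  | zero =>
    cases X with
    | zero => exact congrArg (Form.substFO _) G.rename2_id.symm
    | succ X => simp [inst]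
  | succ e ih =>
    rw [Function.iterate_succ_apply']
    cases X with
    | zero => simp [lift]
    | succ X =>
      by_cases hX : X = e
      · simp only [lift, ih, hX, if_true, ← Form.substFO_rename2, Form.rename2_rename2]
        rfl
      · simp only [lift, ih, hX, if_false, Form.rename2, Nat.add_right_cancel_iff,
          Nat.add_lt_add_iff_right]
        congr 1
        split <;> omega

end PredSubst

namespace Form

variable {S : Sig}

theorem inst2_eq_bind (A G : Form S) (d e : ℕ) :
    inst2 G d e A = A.bind (PredSubst.lift^[e] (.inst G)) (shift d) FOTerm.var := by
  induction A generalizing d e with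
  | bot => rfl
  | pr P ts => simp only [inst2, bind, FOTerm.subst_var, List.map_id]
  | pvar X ts =>
    have h_extend : (fun i => if h : i < ts.length then ts.get ⟨i, h⟩
        else FOTerm.var (i - ts.length + d)) = extend ts (shift d) := by
      funext i
      by_cases h : i < ts.length <;> simp [extend, shift, h]
    simp only [inst2, bind, FOTerm.subst_var, List.map_id, PredSubst.iterate_lift_inst_apply,
      h_extend]
  | arr A B ihA ihB => simp only [inst2, bind, ihA, ihB]
  | fall A ih =>
    simp only [inst2, bind, ih, FOTerm.liftSub_var]
    rfl
  | pall A ih => simp only [inst2, bind, ih, Function.iterate_succ_apply']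

theorem inst2_0_eq_bind (A G : Form S) :
    A.inst2_0 G = A.bind (.inst G) FOTerm.var FOTerm.var :=
  A.inst2_eq_bind G 0 0

theorem exists_bind_inst_congr (A G : Form S) :
    ∃ N, ∀ θ θ' σ : ℕ → FOTerm S,
      (∀ i < N, θ i = θ' i) → A.bind (.inst G) θ σ = A.bind (.inst G) θ' σ := by
  obtain ⟨N, hN⟩ := G.exists_substFO_congr
  have h_min : ∀ θ σ : ℕ → FOTerm S,
      A.bind (.inst G) θ σ = A.bind (.inst G) (θ ∘ (min · N)) σ := by
    refine bind_eq_bind_comp fun X θ ts _ => ?_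
    cases X with
    | zero =>
      exact hN _ _ fun i hi =>
        FOTerm.extend_congr ts (congrArg θ (min_eq_left (by omega)).symm)
    | succ X => rfl
  refine ⟨N + 1, fun θ θ' σ h => ?_⟩
  have h_eq : θ ∘ (min · N) = θ' ∘ (min · N) :=
    funext fun i => h _ (Nat.lt_succ_of_le (min_le_right i N))
  rw [h_min, h_eq, ← h_min]

/-- The indices `z j` are spaced so widely that `j` can be recovered from `z j - k` for any
number `k ≤ m` of parameters. -/
theorem exists_spread_indices (b m : ℕ) : ∃ (z : ℕ → ℕ) (w : ℕ → ℕ ⊕ ℕ),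
    (∀ i < b, w i = Sum.inl i) ∧ ∀ j, ∀ k ≤ m, k ≤ z j ∧ w (z j - k) = Sum.inr j := by
  refine ⟨fun j => b + (m + (m + 1) * j),
    fun i => if i < b then Sum.inl i else Sum.inr ((i - b) / (m + 1)),
    fun i hi => if_pos hi, fun j k hk => ⟨by dsimp only; omega, ?_⟩⟩
  have h_sub : b + (m + (m + 1) * j) - k = b + ((m - k) + (m + 1) * j) := by omega
  have h_div : ((m - k) + (m + 1) * j) / (m + 1) = j := by
    rw [Nat.add_mul_div_left _ _ m.succ_pos, Nat.div_eq_of_lt (by omega), Nat.zero_add]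
  simp only [h_sub, Nat.add_sub_cancel_left, h_div, if_neg (Nat.not_lt.mpr (Nat.le_add_right b _))]

theorem exists_bind_inst2_0 (A H : Form S) (Φ : PredSubst S ℕ) :
    ∃ (G : Form S) (w : ℕ → ℕ ⊕ ℕ), ∀ θ σ : ℕ → FOTerm S, (A.inst2_0 H).bind Φ θ σ
      = (A.bind Φ.lift θ σ).bind (.inst G) (Sum.elim σ θ ∘ w) FOTerm.var := by
  obtain ⟨b, hb⟩ := H.exists_bind_congr Φ
  obtain ⟨z, w, hw, hz⟩ := exists_spread_indices b A.maxArity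
  let G := H.bind Φ (FOTerm.var ∘ z) FOTerm.var
  have h_atom : ∀ X ξ ts, ts.length ≤ A.maxArity → ((PredSubst.inst H).comp Φ) X ξ ts
      = (Φ.lift.comp (.inst G)) X (ξ ∘ Sum.elim Sum.inr w) ts := by
    intro X ξ ts hts
    cases X with
    | zero =>
      have h_param : ∀ i < b, extend ts (ξ ∘ Sum.inl) i = extend ts (ξ ∘ w) i := fun i hi =>
        FOTerm.extend_congr ts (congrArg ξ (hw _ (by omega)).symm)
      have h_env : FOTerm.subst (extend ts (ξ ∘ w)) ∘ FOTerm.var ∘ z = ξ ∘ Sum.inr := by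
        funext j
        obtain ⟨h_le, h_decode⟩ := hz j _ hts
        exact (FOTerm.extend_of_length_le _ h_le).trans (congrArg ξ h_decode)
      calc (H.substFO (extend ts (ξ ∘ Sum.inl))).bind Φ (ξ ∘ Sum.inr) FOTerm.var
          = H.bind Φ (ξ ∘ Sum.inr) (extend ts (ξ ∘ Sum.inl)) := by
            rw [bind_substFO, FOTerm.subst_var, Function.id_comp]
        _ = H.bind Φ (ξ ∘ Sum.inr) (extend ts (ξ ∘ w)) := hb _ _ _ h_param
        _ = G.substFO (extend (ts.map (FOTerm.subst FOTerm.var)) (ξ ∘ w)) := by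
            rw [FOTerm.subst_var, List.map_id, substFO_bind, h_env, FOTerm.subst_comp_var]
    | succ X =>
      calc Φ X (ξ ∘ Sum.inr) (ts.map (FOTerm.subst FOTerm.var))
          = (Φ X (ξ ∘ Sum.inr) ts).substFO FOTerm.var := by
            rw [FOTerm.subst_var, List.map_id, substFO_var, id]
        _ = ((Φ X (ξ ∘ Sum.inr) ts).rename2 (· + 1)).bind (.inst G) (ξ ∘ w) FOTerm.var :=
            (bind_inst_rename2_succ _ G _ _).symm
  refine ⟨G, w, fun θ σ => ?_⟩
  rw [inst2_0_eq_bind, bind_bind, bind_bind, FOTerm.subst_var, FOTerm.subst_comp_var,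
    bind_eq_bind_comp h_atom, Sum.comp_elim, Sum.elim_comp_inr]
  rfl

theorem map_shiftFO_map_bind {ι : Type} (Γ : List (Form S)) (Φ : PredSubst S ι)
    (θ : ι → FOTerm S) (σ : ℕ → FOTerm S) : (Γ.map (bind Φ θ σ)).map shiftFO
      = (Γ.map shiftFO).map (bind Φ (FOTerm.subst (shift 1) ∘ θ) (FOTerm.liftSub σ)) := by
  simp only [List.map_map, Function.comp_def, shiftFO_bind]

theorem map_rename2_map_bind {ι : Type} (Γ : List (Form S)) (Φ : PredSubst S ι)
    (θ : ι → FOTerm S) (σ : ℕ → FOTerm S) : (Γ.map (bind Φ θ σ)).map (rename2 (· + 1))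
      = (Γ.map (rename2 (· + 1))).map (bind Φ.lift θ σ) := by
  simp only [List.map_map, Function.comp_def, rename2_succ_bind]

theorem map_substFO_map_bind {ι : Type} (Γ : List (Form S)) (Φ : PredSubst S ι)
    (θ : ι → FOTerm S) (σ τ : ℕ → FOTerm S) : (Γ.map (bind Φ θ σ)).map (substFO τ)
      = Γ.map (bind Φ (FOTerm.subst τ ∘ θ) (FOTerm.subst τ ∘ σ)) := by
  simp only [List.map_map, Function.comp_def, substFO_bind]

end Form

theorem EqE.subst {S : Sig} {E : Set (FOTerm S × FOTerm S)} {u v : FOTerm S} (h : EqE E u v)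
    (σ : ℕ → FOTerm S) : EqE E (u.subst σ) (v.subst σ) := by
  induction h with
  | rel x y h =>
    obtain ⟨p, hp, τ, rfl, rfl⟩ := h
    exact .rel _ _ ⟨p, hp, FOTerm.subst σ ∘ τ, p.1.subst_subst τ σ, p.2.subst_subst τ σ⟩
  | refl x => exact .refl _
  | symm x y _ ih => exact .symm _ _ ih
  | trans x y z _ _ ihxy ihyz => exact .trans _ _ _ ihxy ihyz

theorem Lam.subst_var (t : Lam) : t.subst Lam.var = t := by
  induction t with
  | var i => rfl
  | app u v ihu ihv => simp only [Lam.subst, ihu, ihv]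
  | abs u ih =>
    have h_lift : Lam.liftSub Lam.var = Lam.var := by funext i; cases i <;> rfl
    rw [Lam.subst, h_lift, ih]

theorem getElem?_map_of_getElem? {α β : Type*} {l l' : List α} {ρ : ℕ → ℕ}
    (h : ∀ i a, l[i]? = some a → l'[ρ i]? = some a) (f : α → β) (i : ℕ) (b : β)
    (hb : (l.map f)[i]? = some b) : (l'.map f)[ρ i]? = some b := by
  rw [List.getElem?_map, Option.map_eq_some_iff] at hb ⊢
  exact hb.imp fun a ha => ha.imp_left (h i a)

namespace AF2

variable {S : Sig} {E : Set (FOTerm S × FOTerm S)} {Γ Δ : List (Form S)} {t : Lam}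
  {A : Form S}

theorem substFO_extend (ts : List (FOTerm S))
    (h : AF2 S E (Γ.map (Form.substFO (shift ts.length))) t A) :
    AF2 S E Γ t (A.substFO (extend ts FOTerm.var)) := by
  induction ts generalizing A with
  | nil =>
    have h_shift : (shift ([] : List (FOTerm S)).length : ℕ → FOTerm S) = FOTerm.var := rfl
    rw [h_shift, Form.substFO_var, List.map_id] at h
    have h_extend : extend [] FOTerm.var = (FOTerm.var : ℕ → FOTerm S) := rfl
    rwa [h_extend, Form.substFO_var, id]
  | cons u ts ih =>
    have h_ctx : Γ.map (Form.substFO (shift (u :: ts).length))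
        = (Γ.map (Form.substFO (shift ts.length))).map Form.shiftFO := by
      simp only [List.map_map, Function.comp_def, Form.shiftFO_eq_substFO, Form.substFO_substFO]
      rfl
    rw [h_ctx] at h
    rw [FOTerm.extend_cons, ← Form.substFO_substFO, ← Form.substFO0_eq_substFO]
    exact ih (.fallE _ (.fallI h))

/-- Only finitely many variables of `G` matter. In a context shifted beyond them they are fresh:
eliminate the quantifier with `G` there, then generalise over them and instantiate them by `η`. -/
theorem bind_inst_of_forall_shift (G : Form S) (η : ℕ → FOTerm S)
    (h : ∀ n, AF2 S E (Γ.map (Form.substFO (shift n))) t ((Form.pall A).substFO (shift n))) :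
    AF2 S E Γ t (A.bind (.inst G) η FOTerm.var) := by
  obtain ⟨N, hN⟩ := A.exists_bind_inst_congr G
  let ts := (List.range N).map η
  have h_agree : ∀ i < N, η i = extend ts FOTerm.var i := fun i hi => by simp [ts, extend, hi]
  have h_inst := substFO_extend ts (.pallE G (h ts.length))
  rwa [Form.inst2_0_eq_bind, Form.substFO_bind, Form.bind_substFO, FOTerm.subst_comp_var,
    FOTerm.subst_extend_comp_shift, ← hN η _ _ h_agree] at h_inst

theorem bind (h : AF2 S E Γ t A) (Φ : PredSubst S ℕ) (θ σ : ℕ → FOTerm S) :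
    AF2 S E (Γ.map (Form.bind Φ θ σ)) t (A.bind Φ θ σ) := by
  induction h generalizing Φ θ σ with
  | var h => exact .var (by rw [List.getElem?_map, h, Option.map_some])
  | absI _ ih => exact .absI (ih Φ θ σ)
  | appE _ _ ih_fun ih_arg => exact .appE (ih_fun Φ θ σ) (ih_arg Φ θ σ)
  | fallI _ ih =>
    refine .fallI ?_
    rw [Form.map_shiftFO_map_bind]
    exact ih Φ _ _
  | fallE u _ ih =>
    rw [Form.bind_substFO0]
    exact .fallE _ (ih Φ θ σ)
  | pallI _ ih =>
    refine .pallI ?_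
    rw [Form.map_rename2_map_bind]
    exact ih Φ.lift θ σ
  | @pallE _ _ A H _ ih =>
    obtain ⟨G, w, h_bind⟩ := A.exists_bind_inst2_0 H Φ
    rw [h_bind]
    refine bind_inst_of_forall_shift G _ fun n => ?_
    rw [Form.map_substFO_map_bind, Form.substFO, Form.substFO_bind]
    exact ih Φ _ _
  | eqE _ huv ih =>
    rw [Form.bind_substFO0]
    refine .eqE ?_ (huv.subst σ)
    rw [← Form.bind_substFO0]
    exact ih Φ θ σ

theorem substFO (h : AF2 S E Γ t A) (σ : ℕ → FOTerm S) :
    AF2 S E (Γ.map (Form.substFO σ)) t (A.substFO σ) := by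
  simpa only [Form.bind_ofRen_id] using h.bind (.ofRen id) FOTerm.var σ

theorem rename2 (h : AF2 S E Γ t A) (ρ : ℕ → ℕ) :
    AF2 S E (Γ.map (Form.rename2 ρ)) t (A.rename2 ρ) := by
  simpa only [Form.bind_ofRen_var] using h.bind (.ofRen ρ) FOTerm.var FOTerm.var

theorem rename (h : AF2 S E Γ t A) {ρ : ℕ → ℕ}
    (hρ : ∀ i B, Γ[i]? = some B → Δ[ρ i]? = some B) : AF2 S E Δ (t.rename ρ) A := by
  induction h generalizing Δ ρ with
  | var h => exact .var (hρ _ _ h)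
  | absI _ ih =>
    refine .absI (ih fun i B hi => ?_)
    cases i with
    | zero => exact hi
    | succ i => exact hρ i B hi
  | appE _ _ ih_fun ih_arg => exact .appE (ih_fun hρ) (ih_arg hρ)
  | fallI _ ih => exact .fallI (ih (getElem?_map_of_getElem? hρ _))
  | fallE u _ ih => exact .fallE u (ih hρ)
  | pallI _ ih => exact .pallI (ih (getElem?_map_of_getElem? hρ _))
  | pallE G _ ih => exact .pallE G (ih hρ)
  | eqE _ huv ih => exact .eqE (ih hρ) huv

theorem subst (h : AF2 S E Γ t A) {s : ℕ → Lam}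
    (hs : ∀ i B, Γ[i]? = some B → AF2 S E Δ (s i) B) : AF2 S E Δ (t.subst s) A := by
  induction h generalizing Δ s with
  | var h => exact hs _ _ h
  | absI _ ih =>
    refine .absI (ih fun i B hi => ?_)
    cases i with
    | zero => exact .var hi
    | succ i => exact (hs i B hi).rename fun _ _ hj => hj
  | appE _ _ ih_fun ih_arg => exact .appE (ih_fun hs) (ih_arg hs)
  | fallI _ ih =>
    refine .fallI (ih fun i B hi => ?_)
    rw [List.getElem?_map, Option.map_eq_some_iff] at hi
    obtain ⟨C, hC, rfl⟩ := hi
    exact (hs i C hC).substFO _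
  | fallE u _ ih => exact .fallE u (ih hs)
  | pallI _ ih =>
    refine .pallI (ih fun i B hi => ?_)
    rw [List.getElem?_map, Option.map_eq_some_iff] at hi
    obtain ⟨C, hC, rfl⟩ := hi
    exact (hs i C hC).rename2 _
  | pallE G _ ih => exact .pallE G (ih hs)
  | eqE _ huv ih => exact .eqE (ih hs) huv

theorem subst0 {B : Form S} {u v : Lam} (hu : AF2 S E (A :: Γ) u B) (hv : AF2 S E Γ v A) :
    AF2 S E Γ (u.subst0 v) B := by
  refine hu.subst fun i C hi => ?_
  cases i with
  | zero => exact Option.some.inj hi ▸ hv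
  | succ i => exact .var hi

theorem replace_head {A' B : Form S} (h : AF2 S E (A :: Γ) t B)
    (hA : AF2 S E (A' :: Γ) (.var 0) A) : AF2 S E (A' :: Γ) t B := by
  rw [← t.subst_var]
  refine h.subst fun i C hi => ?_
  cases i with
  | zero => exact Option.some.inj hi ▸ hA
  | succ i => exact .var hi

end AF2

/-- `AbsIntro E u Γ A` : the typing `Γ ⊢ λu : A` has a derivation which uses only introduction
rules after the typing of the body `u`. -/
inductive AbsIntro {S : Sig} (E : Set (FOTerm S × FOTerm S)) (u : Lam) :
    List (Form S) → Form S → Prop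
  | absI {Γ : List (Form S)} {A B : Form S} : AF2 S E (A :: Γ) u B → AbsIntro E u Γ (.arr A B)
  | fallI {Γ : List (Form S)} {A : Form S} :
      AbsIntro E u (Γ.map Form.shiftFO) A → AbsIntro E u Γ (.fall A)
  | pallI {Γ : List (Form S)} {A : Form S} :
      AbsIntro E u (Γ.map (Form.rename2 (· + 1))) A → AbsIntro E u Γ (.pall A)

namespace AbsIntro

variable {S : Sig} {E : Set (FOTerm S × FOTerm S)} {u : Lam} {Γ : List (Form S)} {A : Form S}

theorem bind (h : AbsIntro E u Γ A) (Φ : PredSubst S ℕ) (θ σ : ℕ → FOTerm S) :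
    AbsIntro E u (Γ.map (Form.bind Φ θ σ)) (A.bind Φ θ σ) := by
  induction h generalizing Φ θ σ with
  | absI h => exact .absI (h.bind Φ θ σ)
  | fallI _ ih =>
    refine .fallI ?_
    rw [Form.map_shiftFO_map_bind]
    exact ih Φ _ _
  | pallI _ ih =>
    refine .pallI ?_
    rw [Form.map_rename2_map_bind]
    exact ih Φ.lift θ σ

theorem fallE (h : AbsIntro E u Γ (.fall A)) (v : FOTerm S) :
    AbsIntro E u Γ (A.substFO0 v) := by
  cases h with
  | fallI h =>
    have h_subst := h.bind (.ofRen id) FOTerm.var (extend [v] FOTerm.var)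
    simpa only [Form.bind_ofRen_id, List.map_map, Function.comp_def,
      ← Form.substFO0_eq_substFO, Form.substFO0_shiftFO, List.map_id'] using h_subst

theorem pallE (h : AbsIntro E u Γ (.pall A)) (G : Form S) : AbsIntro E u Γ (A.inst2_0 G) := by
  cases h with
  | pallI h =>
    have h_inst := h.bind (.inst G) FOTerm.var FOTerm.var
    simpa only [Form.inst2_0_eq_bind, List.map_map, Function.comp_def,
      Form.bind_inst_rename2_succ, Form.substFO_var, id, List.map_id'] using h_inst

theorem eqE {v w : FOTerm S} (h : AbsIntro E u Γ (A.substFO0 v)) (hvw : EqE E v w) :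
    AbsIntro E u Γ (A.substFO0 w) := by
  generalize hD : A.substFO0 v = D at h
  induction h generalizing A v w with
  | absI h =>
    cases A with
    | arr A B =>
      obtain ⟨rfl, rfl⟩ := Form.arr.inj hD
      exact .absI ((AF2.eqE h hvw).replace_head (.eqE (.var rfl) (.symm _ _ hvw)))
    | _ => cases hD
  | fallI _ ih =>
    cases A with
    | fall A =>
      rw [Form.substFO0_fall] at hD ⊢
      exact .fallI (ih (hvw.subst _) (Form.fall.inj hD))
    | _ => cases hD
  | pallI _ ih =>
    cases A with
    | pall A => exact .pallI (ih hvw (Form.pall.inj hD))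
    | _ => cases hD

end AbsIntro

namespace AF2

variable {S : Sig} {E : Set (FOTerm S × FOTerm S)} {Γ : List (Form S)} {t t' u : Lam}
  {A B : Form S}

theorem absIntro (h : AF2 S E Γ (.abs u) A) : AbsIntro E u Γ A := by
  generalize ht : Lam.abs u = t at h
  induction h with
  | var | appE => cases ht
  | absI h => cases ht; exact .absI h
  | fallI _ ih => exact .fallI (ih ht)
  | fallE v _ ih => exact (ih ht).fallE v
  | pallI _ ih => exact .pallI (ih ht)
  | pallE G _ ih => exact (ih ht).pallE G
  | eqE _ hvw ih => exact (ih ht).eqE hvw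

theorem of_abs_arr (h : AF2 S E Γ (.abs u) (.arr A B)) : AF2 S E (A :: Γ) u B := by
  cases h.absIntro with
  | absI h => exact h

theorem beta (h : AF2 S E Γ t A) (hβ : Lam.Beta t t') : AF2 S E Γ t' A := by
  induction h generalizing t' with
  | var => cases hβ
  | absI _ ih =>
    cases hβ with
    | abs hβ => exact .absI (ih hβ)
  | appE hu hv ihu ihv =>
    cases hβ with
    | beta => exact hu.of_abs_arr.subst0 hv
    | appL _ hβ => exact .appE (ihu hβ) hv
    | appR _ hβ => exact .appE hu (ihv hβ)
  | fallI _ ih => exact .fallI (ih hβ)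
  | fallE v _ ih => exact .fallE v (ih hβ)
  | pallI _ ih => exact .pallI (ih hβ)
  | pallE G _ ih => exact .pallE G (ih hβ)
  | eqE _ hvw ih => exact .eqE (ih hβ) hvw

end AF2

/-- In the AF2 type system, types are preserved by β-reduction. -/
theorem stmt1 (S : Sig) (E : Set (FOTerm S × FOTerm S)) (Γ : List (Form S))
    (t t' : Lam) (A : Form S) (h : AF2 S E Γ t A)
    (hred : Relation.ReflTransGen Lam.Beta t t') : AF2 S E Γ t' A := by
  induction hred with
  | refl => exact h
  | tail _ hβ ih => exact ih.beta hβ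
end

section
/- In the AF2 type system, every typable λ-term is strongly normalizable: if Γ ⊢_AF2 t : A then every β-reduction sequence starting from t terminates. -/
/-! Reducibility candidates (Tait–Girard). First-order data plays no computational role, so each
formula is interpreted by a set of λ-terms that ignores it: atomic formulas `P(t₁,…,tₙ)` and `⊥`
become the set of strongly normalizing terms, a predicate variable an arbitrary candidate, and a
second-order quantifier the intersection over all candidates. This makes the rules for the
first-order quantifier and for equations sound by mere invariance, and leaves the usual argument
for system F: a typed term, under a substitution realizing its context, belongs to the
interpretation of its type; apply this to the identity substitution. -/

section Sequences

variable {α β : Type*}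

/-- The sequence `a, f 0, f 1, …`: the extension of an assignment of the free de Bruijn indices by
a value for a newly bound variable. -/
def scons (a : α) (f : ℕ → α) : ℕ → α
  | 0 => a
  | i + 1 => f i

theorem comp_scons (g : α → β) (a : α) (f : ℕ → α) : g ∘ scons a f = scons (g a) (g ∘ f) := by
  funext i
  cases i <;> rfl

/-- The sequence `f 0, …, f (e - 1), a, f e, …`: the extension of an assignment by a value for the
variable of index `e`. -/
def insertNth : ℕ → α → (ℕ → α) → ℕ → α
  | 0, a, f => scons a f
  | e + 1, a, f => scons (f 0) (insertNth e a (f ∘ Nat.succ))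

theorem insertNth_self (e : ℕ) (a : α) (f : ℕ → α) : insertNth e a f e = a := by
  induction e generalizing f with
  | zero => rfl
  | succ _ ih => exact ih _

theorem insertNth_of_ne {e i : ℕ} (hi : i ≠ e) (a : α) (f : ℕ → α) :
    insertNth e a f i = f (if e < i then i - 1 else i) := by
  induction e generalizing i f with
  | zero =>
    obtain ⟨i, rfl⟩ := Nat.exists_eq_succ_of_ne_zero hi
    simp [insertNth, scons]
  | succ e ih =>
    cases i with
    | zero => rfl
    | succ i =>
      have shift : (if e < i then i - 1 else i) + 1 =
          if e + 1 < i + 1 then i + 1 - 1 else i + 1 := by grind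
      rw [← shift]
      exact ih (by omega) _

end Sequences

namespace Lam

theorem rename_abs (ρ : ℕ → ℕ) (u : Lam) :
    (abs u).rename ρ = abs (u.rename (scons 0 (Nat.succ ∘ ρ))) := by
  have lift_eq : (fun i => match i with | 0 => 0 | j + 1 => ρ j + 1) = scons 0 (Nat.succ ∘ ρ) := by
    funext i
    cases i <;> rfl
  exact congrArg (fun r => abs (u.rename r)) lift_eq

theorem liftSub_eq_scons (σ : ℕ → Lam) : liftSub σ = scons (var 0) (rename Nat.succ ∘ σ) := by
  funext i
  cases i <;> rfl

theorem subst0_eq_subst_scons (u v : Lam) : u.subst0 v = u.subst (scons v var) := by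
  rw [subst0]
  congr 1

theorem rename_rename (t : Lam) (ρ ρ' : ℕ → ℕ) : (t.rename ρ).rename ρ' = t.rename (ρ' ∘ ρ) := by
  induction t generalizing ρ ρ' with
  | var i => rfl
  | app u v hu hv => simp only [rename, hu, hv]
  | abs u hu =>
    simp only [rename_abs, hu, comp_scons]
    rfl

theorem subst_rename (t : Lam) (ρ : ℕ → ℕ) (σ : ℕ → Lam) :
    (t.rename ρ).subst σ = t.subst (σ ∘ ρ) := by
  induction t generalizing ρ σ with
  | var i => rfl
  | app u v hu hv => simp only [rename, subst, hu, hv]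
  | abs u hu =>
    simp only [rename_abs, subst, hu, liftSub_eq_scons, comp_scons]
    rfl

theorem rename_comp_liftSub (σ : ℕ → Lam) (ρ : ℕ → ℕ) :
    rename (scons 0 (Nat.succ ∘ ρ)) ∘ liftSub σ = liftSub (rename ρ ∘ σ) := by
  simp only [liftSub_eq_scons, comp_scons]
  congr 1
  funext i
  simp only [Function.comp_apply, rename_rename]
  rfl

theorem rename_subst (t : Lam) (σ : ℕ → Lam) (ρ : ℕ → ℕ) :
    (t.subst σ).rename ρ = t.subst (rename ρ ∘ σ) := by
  induction t generalizing σ ρ with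
  | var i => rfl
  | app u v hu hv => simp only [rename, subst, hu, hv]
  | abs u hu => simp only [subst, rename_abs, hu, rename_comp_liftSub]

theorem subst_comp_liftSub (σ τ : ℕ → Lam) :
    subst (liftSub τ) ∘ liftSub σ = liftSub (subst τ ∘ σ) := by
  simp only [liftSub_eq_scons, comp_scons]
  congr 1
  funext i
  simp only [Function.comp_apply, subst_rename, rename_subst]
  rfl

theorem subst_subst (t : Lam) (σ τ : ℕ → Lam) :
    (t.subst σ).subst τ = t.subst (subst τ ∘ σ) := by
  induction t generalizing σ τ with
  | var i => rfl
  | app u v hu hv => simp only [subst, hu, hv]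
  | abs u hu => simp only [subst, hu, subst_comp_liftSub]

theorem liftSub_var : liftSub var = var := by
  funext i
  cases i <;> rfl

theorem subst_var_s2 (t : Lam) : t.subst var = t := by
  induction t with
  | var i => rfl
  | app u v hu hv => rw [subst, hu, hv]
  | abs u hu => rw [subst, liftSub_var, hu]

theorem subst_liftSub_subst0 (t v : Lam) (σ : ℕ → Lam) :
    (t.subst (liftSub σ)).subst0 v = t.subst (scons v σ) := by
  rw [subst0_eq_subst_scons, subst_subst, liftSub_eq_scons, comp_scons]
  congr 2
  funext i
  exact (subst_rename _ _ _).trans (subst_var_s2 _)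

theorem subst0_subst (u v : Lam) (σ : ℕ → Lam) :
    (u.subst0 v).subst σ = (u.subst (liftSub σ)).subst0 (v.subst σ) := by
  rw [subst_liftSub_subst0, subst0_eq_subst_scons, subst_subst, comp_scons]
  rfl

theorem Beta.subst {u u' : Lam} (h : Beta u u') (σ : ℕ → Lam) :
    Beta (u.subst σ) (u'.subst σ) := by
  induction h generalizing σ with
  | beta u v =>
    rw [subst0_subst]
    exact .beta _ _
  | appL v _ ih => exact .appL _ (ih σ)
  | appR u _ ih => exact .appR _ (ih σ)
  | abs _ ih => exact .abs (ih _)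

/-- Strong normalization, expressed as well-foundedness of β-reduction below `t`. -/
abbrev SN (t : Lam) : Prop := Acc (fun u v : Lam => Beta v u) t

theorem SN.of_map {f : Lam → Lam} (hf : ∀ {u u'}, Beta u u' → Beta (f u) (f u')) {t : Lam}
    (h : SN (f t)) : SN t :=
  Subrelation.accessible hf (InvImage.accessible f h)

end Lam

open Lam

/-- A reducibility candidate: a set of strongly normalizing terms that is closed under β-reduction
and contains each neutral term (one that is not an abstraction) as soon as it contains all its
one-step reducts. -/
structure Candidate where
  carrier : Set Lam
  sn' : ∀ {t}, t ∈ carrier → SN t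
  beta' : ∀ {t u}, t ∈ carrier → Beta t u → u ∈ carrier
  neutral' : ∀ {t}, ¬ t.IsAbs → (∀ u, Beta t u → u ∈ carrier) → t ∈ carrier

namespace Candidate

instance : SetLike Candidate Lam where
  coe := carrier
  coe_injective := by
    rintro ⟨⟩ ⟨⟩ _
    congr

variable {P Q : Candidate} {t u : Lam}

theorem sn (h : t ∈ P) : SN t := P.sn' h

theorem beta_mem (h : t ∈ P) (hb : Beta t u) : u ∈ P := P.beta' h hb

theorem neutral_mem (ht : ¬ t.IsAbs) (h : ∀ u, Beta t u → u ∈ P) : t ∈ P := P.neutral' ht h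

theorem var_mem (i : ℕ) : var i ∈ P := neutral_mem id nofun

/-- The candidate of all strongly normalizing terms, interpreting `⊥` and the atomic formulas of
predicate symbols. -/
def allSN : Candidate where
  carrier := {t | SN t}
  sn' := id
  beta' := Acc.inv
  neutral' _ h := Acc.intro _ h

instance : Nonempty Candidate := ⟨allSN⟩

theorem app_mem_of_beta (hbeta : ∀ u, t = abs u → ∀ v ∈ P, u.subst0 v ∈ Q)
    (hred : ∀ t', Beta t t' → ∀ v ∈ P, app t' v ∈ Q) : ∀ v ∈ P, app t v ∈ Q := by
  intro v hv
  -- reductions inside the argument are absorbed by induction on its strong normalization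
  induction sn hv with
  | intro v _ ih =>
    refine neutral_mem id fun w hw => ?_
    cases hw with
    | beta u => exact hbeta u rfl v hv
    | appL _ ht => exact hred _ ht v hv
    | appR _ hv' => exact ih _ hv' (beta_mem hv hv')

/-- The candidate interpreting an implication: the terms mapping `P` to `Q` by application. -/
def arrow (P Q : Candidate) : Candidate where
  carrier := {t | ∀ v ∈ P, app t v ∈ Q}
  sn' h := SN.of_map (f := (app · (var 0))) (.appL _) (sn (h _ (var_mem 0)))
  beta' h hb v hv := beta_mem (h v hv) (.appL _ hb)
  neutral' ht h := app_mem_of_beta (fun _ hu => (ht (hu ▸ trivial)).elim) h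

theorem abs_mem_arrow (h : ∀ v ∈ P, u.subst0 v ∈ Q) : abs u ∈ arrow P Q := by
  have hu : SN u := SN.of_map (f := (·.subst0 (var 0))) (·.subst _) (sn (h _ (var_mem 0)))
  induction hu with
  | intro u _ ih =>
    refine app_mem_of_beta (fun _ hu => by rwa [← abs.inj hu]) fun t' ht' => ?_
    cases ht' with
    | abs hb => exact ih _ hb fun v hv => beta_mem (h v hv) (hb.subst _)

/-- The intersection of a nonempty family of candidates. -/
def iInter {ι : Type*} [Nonempty ι] (F : ι → Candidate) : Candidate where
  carrier := {t | ∀ i, t ∈ F i}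
  sn' h := sn (h (Classical.arbitrary ι))
  beta' h hb i := beta_mem (h i) hb
  neutral' ht h i := neutral_mem ht fun u hu => h u hu i

end Candidate

namespace Form

variable {S : Sig}

/-- The candidate interpreting a formula when its free predicate variables are interpreted by `ρ`.
All arguments of predicates are forgotten. -/
def interp : Form S → (ℕ → Candidate) → Candidate
  | bot, _ => .allSN
  | pr _ _, _ => .allSN
  | pvar X _, ρ => ρ X
  | arr A B, ρ => (A.interp ρ).arrow (B.interp ρ)
  | fall A, ρ => A.interp ρ
  | pall A, ρ => .iInter fun C => A.interp (scons C ρ)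

theorem interp_substFO (A : Form S) (σ : ℕ → FOTerm S) (ρ : ℕ → Candidate) :
    (A.substFO σ).interp ρ = A.interp ρ := by
  induction A generalizing σ ρ with
  | bot | pr | pvar => rfl
  | arr A B hA hB => simp only [substFO, interp, hA, hB]
  | fall A hA | pall A hA => simp only [substFO, interp, hA]

theorem interp_rename2 (A : Form S) (r : ℕ → ℕ) (ρ : ℕ → Candidate) :
    (A.rename2 r).interp ρ = A.interp (ρ ∘ r) := by
  induction A generalizing r ρ with
  | bot | pr | pvar => rfl
  | arr A B hA hB => simp only [rename2, interp, hA, hB]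
  | fall A hA => simp only [rename2, interp, hA]
  | pall A hA =>
    simp only [rename2, interp, hA]
    congr! 3 with C
    funext i
    cases i <;> rfl

theorem interp_inst2 (A G : Form S) (d e : ℕ) (ρ : ℕ → Candidate) :
    (inst2 G d e A).interp ρ = A.interp (insertNth e (G.interp (ρ ∘ (· + e))) ρ) := by
  induction A generalizing d e ρ with
  | bot | pr => rfl
  | pvar X ts =>
    by_cases h : X = e
    · subst h
      simp only [inst2, if_true, interp, interp_substFO, interp_rename2, insertNth_self]
    · simp only [inst2, if_neg h, interp, insertNth_of_ne h]
  | arr A B hA hB => simp only [inst2, interp, hA, hB]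
  | fall A hA => simp only [inst2, interp, hA]
  | pall A hA =>
    simp only [inst2, interp, hA]
    rfl

theorem interp_inst2_0 (A G : Form S) (ρ : ℕ → Candidate) :
    (A.inst2_0 G).interp ρ = A.interp (scons (G.interp ρ) ρ) :=
  interp_inst2 A G 0 0 ρ

end Form

/-- The substitution `σ` realizes the context `Γ` under `ρ`: it sends each variable declared in `Γ`
to a member of the interpretation of its type. -/
def Realizes {S : Sig} (ρ : ℕ → Candidate) (σ : ℕ → Lam) (Γ : List (Form S)) : Prop :=
  ∀ i A, Γ[i]? = some A → σ i ∈ A.interp ρ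

namespace Realizes

variable {S : Sig} {ρ ρ' : ℕ → Candidate} {σ : ℕ → Lam} {Γ : List (Form S)}

theorem cons {A : Form S} {v : Lam} (hv : v ∈ A.interp ρ) (h : Realizes ρ σ Γ) :
    Realizes ρ (scons v σ) (A :: Γ) := by
  rintro (_ | i) B hB
  · obtain rfl : A = B := by simpa only [List.getElem?_cons_zero, Option.some.injEq] using hB
    exact hv
  · exact h i B hB

theorem map {f : Form S → Form S} (hf : ∀ A, (f A).interp ρ' = A.interp ρ)
    (h : Realizes ρ σ Γ) : Realizes ρ' σ (Γ.map f) := by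
  intro i B hB
  obtain ⟨A, hA, rfl⟩ : ∃ A, Γ[i]? = some A ∧ f A = B := by
    simpa only [List.getElem?_map, Option.map_eq_some_iff] using hB
  exact hf A ▸ h i A hA

end Realizes

theorem AF2.subst_mem_interp {S : Sig} {E : Set (FOTerm S × FOTerm S)} {Γ : List (Form S)}
    {t : Lam} {A : Form S} (h : AF2 S E Γ t A) {ρ : ℕ → Candidate} {σ : ℕ → Lam}
    (hσ : Realizes ρ σ Γ) : t.subst σ ∈ A.interp ρ := by
  induction h generalizing ρ σ with
  | var hi => exact hσ _ _ hi
  | absI _ ih =>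
    refine Candidate.abs_mem_arrow fun v hv => ?_
    rw [subst_liftSub_subst0]
    exact ih (hσ.cons hv)
  | appE _ _ ihu ihv => exact ihu hσ _ (ihv hσ)
  | fallI _ ih => exact ih (hσ.map fun A => A.interp_substFO _ ρ)
  | fallE u _ ih =>
    rw [Form.substFO0, Form.interp_substFO]
    exact ih hσ
  | pallI _ ih => exact fun C => ih (hσ.map fun A => A.interp_rename2 _ (scons C ρ))
  | pallE G _ ih =>
    rw [Form.interp_inst2_0]
    exact ih hσ (G.interp ρ)
  | eqE _ _ ih =>
    simp only [Form.substFO0, Form.interp_substFO] at ih ⊢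
    exact ih hσ

/-- In the AF2 type system, typable λ-terms are strongly normalizable:
every β-reduction sequence from a typable term terminates. -/
theorem stmt2 (S : Sig) (E : Set (FOTerm S × FOTerm S)) (Γ : List (Form S))
    (t : Lam) (A : Form S) (h : AF2 S E Γ t A) :
    Acc (fun u v : Lam => Lam.Beta v u) t := by
  let ρ : ℕ → Candidate := fun _ => .allSN
  have hvar : Realizes ρ var Γ := fun i _ _ => Candidate.var_mem i
  have ht : t ∈ A.interp ρ := t.subst_var_s2 ▸ h.subst_mem_interp hvar
  exact Candidate.sn ht
end
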